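/- Define a(0) = 0 and a(n) = 29n² − 29n + 8 for n ≥ 1, and b(0) = 5 and b(n) = −6n²(9n² − 1) for n ≥ 1. Then the convergents p(n)/q(n) of the continued fraction with partial quotients (a(n), b(n)) converge to log(2) as n → ∞. (This is a new continued fraction for log(2), converging in O((2/27)^n).) -/

import Mathlib

open Filter Topology

/-!
The remainders `q n * log 2 - p n` have the closed form
`∑ₖ 2ⁿ (3n+1)! (n+k)!² C(2k,k) / (3n+2k+2)!`: at `n = 0` this is the series
`∑ₖ 1 / ((2k+1)(2k+2)) = log 2`, and creative telescoping in `k` shows that it satisfies the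
recurrence of the continued fraction. The summands grow by a factor of at most `2(n+1)²` from `n` to
`n + 1`, whereas the denominators `q n` grow by at least `8(n+1)²`, so that
`log 2 - p n / q n = O(4⁻ⁿ)`.
-/

section ThreeTermRecurrence

lemma eq_of_three_term_recurrence {R : Type*} [Add R] [Mul R] {a b u v : ℕ → R}
    (hu : ∀ n, u (n + 2) = a n * u (n + 1) + b n * u n)
    (hv : ∀ n, v (n + 2) = a n * v (n + 1) + b n * v n)
    (h₀ : u 0 = v 0) (h₁ : u 1 = v 1) (n : ℕ) : u n = v n := by
  induction n using Nat.twoStepInduction with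
  | zero => exact h₀
  | one => exact h₁
  | more n ih ih' => rw [hu, hv, ih, ih']

lemma pos_and_mul_le_succ_of_three_term_recurrence {R : Type*} [CommRing R] [LinearOrder R]
    [IsStrictOrderedRing R] {a b c q : ℕ → R}
    (hq : ∀ n, q (n + 2) = a n * q (n + 1) + b n * q n)
    (hc : ∀ n, 0 < c n) (hb : ∀ n, b n ≤ 0) (habc : ∀ n, c n * c (n + 1) ≤ c n * a n + b n)
    (h₀ : 0 < q 0) (h₁ : c 0 * q 0 ≤ q 1) (n : ℕ) : 0 < q n ∧ c n * q n ≤ q (n + 1) := by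
  induction n with
  | zero => exact ⟨h₀, h₁⟩
  | succ n ih =>
    obtain ⟨hpos, hle⟩ := ih
    have hpos' : 0 < q (n + 1) := (mul_pos (hc n) hpos).trans_le hle
    refine ⟨hpos', le_of_mul_le_mul_left ?_ (hc n)⟩
    calc c n * (c (n + 1) * q (n + 1))
        = c n * c (n + 1) * q (n + 1) := by ring
      _ ≤ (c n * a n + b n) * q (n + 1) := by gcongr; exact habc n
      _ = c n * a n * q (n + 1) + b n * q (n + 1) := by ring
      _ ≤ c n * a n * q (n + 1) + b n * (c n * q n) :=
        add_le_add_right (mul_le_mul_of_nonpos_left hle (hb n)) _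
      _ = c n * q (n + 2) := by rw [hq]; ring

end ThreeTermRecurrence

lemma tendsto_div_zero_of_growth {r q s : ℕ → ℝ} {c d : ℝ} (hc : 0 ≤ c) (hcd : c < d)
    (hs : ∀ n, 0 < s n) (hr : ∀ n, 0 ≤ r n) (hq : ∀ n, 0 < q n)
    (hr_succ : ∀ n, r (n + 1) ≤ c * s n * r n) (hq_succ : ∀ n, d * s n * q n ≤ q (n + 1)) :
    Tendsto (fun n => r n / q n) atTop (𝓝 0) := by
  have hd : 0 < d := hc.trans_lt hcd
  have hstep (n : ℕ) : r (n + 1) / q (n + 1) ≤ c / d * (r n / q n) := by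
    have := hs n
    have := hq n
    calc r (n + 1) / q (n + 1) ≤ c * s n * r n / (d * s n * q n) :=
          div_le_div₀ (by have := hr n; positivity) (hr_succ n) (by positivity) (hq_succ n)
      _ = c / d * (r n / q n) := by field_simp
  have hgeom : Tendsto (fun n => (c / d) ^ n * (r 0 / q 0)) atTop (𝓝 0) := by
    simpa using (tendsto_pow_atTop_nhds_zero_of_lt_one (div_nonneg hc hd.le)
      ((div_lt_one hd).2 hcd)).mul_const (r 0 / q 0)
  exact squeeze_zero (fun n => div_nonneg (hr n) (hq n).le)
    (fun n => le_geom (u := fun n => r n / q n) (div_nonneg hc hd.le) n fun k _ => hstep k) hgeom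

lemma tendsto_div_of_tendsto_remainder_div {ι : Type*} {l : Filter ι} {p q : ι → ℝ} {S : ℝ}
    (hq : ∀ i, q i ≠ 0) (h : Tendsto (fun i => (q i * S - p i) / q i) l (𝓝 0)) :
    Tendsto (fun i => p i / q i) l (𝓝 S) := by
  have hlim := h.const_sub S
  rw [sub_zero] at hlim
  refine hlim.congr fun i => ?_
  rw [sub_div, mul_div_cancel_left₀ _ (hq i), sub_sub_cancel]

lemma eq_sub_of_hasSum_sub_of_tendsto {E : Type*} [AddCommGroup E] [TopologicalSpace E]
    [ContinuousSub E] [T2Space E] {f : ℕ → E} {s l : E}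
    (hs : HasSum (fun k => f (k + 1) - f k) s) (hl : Tendsto f atTop (𝓝 l)) : s = l - f 0 := by
  refine tendsto_nhds_unique hs.tendsto_sum_nat ?_
  simpa only [Finset.sum_range_sub] using hl.sub_const (f 0)

section AlternatingHarmonicSeries

lemma sum_range_one_div_odd_mul_even (N : ℕ) :
    ∑ k ∈ Finset.range N, 1 / ((2 * (k : ℝ) + 1) * (2 * k + 2)) =
      (harmonic (2 * N) : ℝ) - harmonic N := by
  induction N with
  | zero => simp
  | succ N ih =>
    rw [Finset.sum_range_succ, ih, mul_add_one, harmonic_succ, harmonic_succ, harmonic_succ]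
    push_cast
    field_simp
    ring

lemma tendsto_harmonic_two_mul_sub_harmonic :
    Tendsto (fun N : ℕ => (harmonic (2 * N) : ℝ) - harmonic N) atTop (𝓝 (Real.log 2)) := by
  have htwo : Tendsto (fun N : ℕ => 2 * N) atTop atTop := tendsto_id.const_mul_atTop' two_pos
  have hlim := ((Real.tendsto_harmonic_sub_log.comp htwo).sub
    Real.tendsto_harmonic_sub_log).add_const (Real.log 2)
  rw [sub_self, zero_add] at hlim
  refine hlim.congr' ?_
  filter_upwards [eventually_ne_atTop 0] with N hN
  have hlog : Real.log ((2 * N : ℕ) : ℝ) = Real.log 2 + Real.log N := by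
    rw [Nat.cast_mul, Nat.cast_two, Real.log_mul two_ne_zero (Nat.cast_ne_zero.2 hN)]
  simp only [Function.comp_apply, hlog]
  ring

lemma hasSum_one_div_odd_mul_even_log_two :
    HasSum (fun k : ℕ => 1 / ((2 * (k : ℝ) + 1) * (2 * k + 2))) (Real.log 2) := by
  rw [hasSum_iff_tendsto_nat_of_nonneg (fun k => by positivity)]
  simpa only [sum_range_one_div_odd_mul_even] using tendsto_harmonic_two_mul_sub_harmonic

end AlternatingHarmonicSeries

section Remainder

open scoped Nat

/-- The summands of `logTwoRemainder`, normalized so that no factor depending on `n` is needed in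
front of the series. -/
noncomputable def logTwoTerm (n k : ℕ) : ℝ :=
  2 ^ n * (3 * n + 1)! * (n + k)! ^ 2 * k.centralBinom / (3 * n + 2 * k + 2)!

/-- The series for the remainder `q n * log 2 - p n` of the `n`-th convergent `p n / q n`. -/
noncomputable def logTwoRemainder (n : ℕ) : ℝ := ∑' k, logTwoTerm n k

lemma logTwoTerm_nonneg (n k : ℕ) : 0 ≤ logTwoTerm n k := by
  unfold logTwoTerm
  positivity

lemma logTwoRemainder_nonneg (n : ℕ) : 0 ≤ logTwoRemainder n := tsum_nonneg (logTwoTerm_nonneg n)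

lemma logTwoTerm_zero_left (k : ℕ) :
    logTwoTerm 0 k = 1 / ((2 * (k : ℝ) + 1) * (2 * k + 2)) := by
  have hchoose : ((2 * k)! : ℝ) = k.centralBinom * k ! * k ! := by
    have h := Nat.choose_mul_factorial_mul_factorial (Nat.le_mul_of_pos_left k two_pos)
    rw [← Nat.centralBinom_eq_two_mul_choose, two_mul, Nat.add_sub_cancel, ← two_mul] at h
    exact_mod_cast h.symm
  have := k.centralBinom_pos
  simp only [logTwoTerm, mul_zero, zero_add, Nat.factorial_succ (2 * k + 1),
    Nat.factorial_succ (2 * k), Nat.factorial_one]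
  push_cast
  rw [hchoose]
  field_simp
  ring

lemma logTwoTerm_succ_left (n k : ℕ) :
    logTwoTerm (n + 1) k = 6 * (n + 1) * (3 * n + 2) * (3 * n + 4) * (n + k + 1) ^ 2 /
      ((3 * n + 2 * k + 3) * (3 * n + 2 * k + 4) * (3 * n + 2 * k + 5)) * logTwoTerm n k := by
  have h₁ : 3 * (n + 1) + 1 = 3 * n + 1 + 1 + 1 + 1 := by ring
  have h₂ : n + 1 + k = n + k + 1 := by ring
  have h₃ : 3 * (n + 1) + 2 * k + 2 = 3 * n + 2 * k + 2 + 1 + 1 + 1 := by ring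
  simp only [logTwoTerm, h₁, h₂, h₃, Nat.factorial_succ (_ + 1), Nat.factorial_succ (n + k)]
  push_cast
  field_simp
  ring

lemma logTwoTerm_succ_right (n k : ℕ) :
    logTwoTerm n (k + 1) = 2 * (2 * k + 1) * (n + k + 1) ^ 2 /
      ((k + 1) * (3 * n + 2 * k + 3) * (3 * n + 2 * k + 4)) * logTwoTerm n k := by
  have hcentral : ((k + 1).centralBinom : ℝ) = 2 * (2 * k + 1) / (k + 1) * k.centralBinom := by
    have h : ((k : ℝ) + 1) * (k + 1).centralBinom = 2 * (2 * k + 1) * k.centralBinom :=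
      mod_cast k.succ_mul_centralBinom_succ
    field_simp
    linear_combination h
  have h₁ : 3 * n + 2 * (k + 1) + 2 = 3 * n + 2 * k + 2 + 1 + 1 := by ring
  simp only [logTwoTerm, h₁, ← add_assoc n k 1, hcentral, Nat.factorial_succ (n + k),
    Nat.factorial_succ (_ + 1)]
  push_cast
  field_simp
  ring

lemma logTwoTerm_succ_left_le (n k : ℕ) :
    logTwoTerm (n + 1) k ≤ 2 * (n + 1) ^ 2 * logTwoTerm n k := by
  rw [logTwoTerm_succ_left]
  refine mul_le_mul_of_nonneg_right ?_ (logTwoTerm_nonneg n k)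
  rw [div_le_iff₀ (by positivity), ← sub_nonneg]
  ring_nf
  positivity

lemma summable_logTwoTerm (n : ℕ) : Summable (logTwoTerm n) := by
  induction n with
  | zero =>
    rw [summable_congr logTwoTerm_zero_left]
    exact hasSum_one_div_odd_mul_even_log_two.summable
  | succ n ih =>
    exact (ih.mul_left _).of_nonneg_of_le (logTwoTerm_nonneg _) (logTwoTerm_succ_left_le n)

lemma logTwoRemainder_succ_le (n : ℕ) :
    logTwoRemainder (n + 1) ≤ 2 * (n + 1) ^ 2 * logTwoRemainder n := by
  rw [logTwoRemainder, logTwoRemainder, ← tsum_mul_left]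
  exact (summable_logTwoTerm _).tsum_le_tsum (logTwoTerm_succ_left_le n)
    ((summable_logTwoTerm n).mul_left _)

lemma tendsto_natCast_mul_logTwoTerm (n : ℕ) :
    Tendsto (fun k : ℕ => k * logTwoTerm n k) atTop (𝓝 0) := by
  induction n with
  | zero =>
    refine squeeze_zero (fun k => mul_nonneg k.cast_nonneg (logTwoTerm_nonneg 0 k)) (fun k => ?_)
      tendsto_one_div_add_atTop_nhds_zero_nat
    rw [logTwoTerm_zero_left, mul_one_div, div_le_div_iff₀ (by positivity) (by positivity),
      ← sub_nonneg]
    ring_nf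
    positivity
  | succ n ih =>
    refine squeeze_zero (fun k => mul_nonneg k.cast_nonneg (logTwoTerm_nonneg _ k)) (fun k => ?_)
      (by simpa only [mul_zero] using ih.const_mul (2 * ((n : ℝ) + 1) ^ 2))
    rw [mul_left_comm]
    gcongr
    exact logTwoTerm_succ_left_le n k

lemma logTwoRemainder_zero : logTwoRemainder 0 = Real.log 2 := by
  simpa only [logTwoRemainder, logTwoTerm_zero_left] using
    hasSum_one_div_odd_mul_even_log_two.tsum_eq

lemma logTwoRemainder_one : logTwoRemainder 1 = 8 * Real.log 2 - 5 := by
  -- `G` is read off the partial fraction decomposition of the summand in `htelescope`.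
  set G : ℕ → ℝ := fun k =>
    15 / 2 * (1 / (2 * k + 1)) + 9 / 2 * (1 / (2 * k + 3)) - 8 * (1 / (2 * k + 2)) with hG
  have htelescope (k : ℕ) : logTwoTerm 1 k - 8 * logTwoTerm 0 k = G (k + 1) - G k := by
    rw [logTwoTerm_succ_left 0 k, logTwoTerm_zero_left]
    simp only [hG]
    push_cast
    field_simp
    ring
  have hsum := (summable_logTwoTerm 1).hasSum.sub ((summable_logTwoTerm 0).hasSum.mul_left 8)
  have hG_lim : Tendsto G atTop (𝓝 0) := by
    have hinv (c : ℝ) : Tendsto (fun k : ℕ => 1 / (2 * (k : ℝ) + c)) atTop (𝓝 0) :=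
      tendsto_const_nhds.div_atTop <| tendsto_atTop_add_const_right _ c <|
        tendsto_natCast_atTop_atTop.const_mul_atTop two_pos
    simpa only [mul_zero, add_zero, sub_zero] using
      (((hinv 1).const_mul (15 / 2)).add ((hinv 3).const_mul (9 / 2))).sub ((hinv 2).const_mul 8)
  simp only [htelescope] at hsum
  have hvalue := eq_sub_of_hasSum_sub_of_tendsto hsum hG_lim
  have hG_zero : G 0 = 5 := by norm_num [hG]
  rw [← logTwoRemainder, ← logTwoRemainder, logTwoRemainder_zero, hG_zero] at hvalue
  linarith

/-- The polynomial factor of Zeilberger's certificate for the recurrence of `logTwoTerm`, found by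
solving a linear system for its coefficients. -/
noncomputable def logTwoCertificatePoly (n k : ℝ) : ℝ :=
  12 * (n + 1) * (n + 2) * (3 * n + 5) - (45 * n ^ 3 + 149 * n ^ 2 + 120 * n - 2) * k
    - (94 * n ^ 2 + 264 * n + 176) * k ^ 2 - (66 * n + 98) * k ^ 3 - 16 * k ^ 4

/-- Zeilberger's certificate for the recurrence of `logTwoTerm`: its differences in `k` are what
remains of the three-term recurrence when it is applied to the individual summands. -/
noncomputable def logTwoCertificate (n k : ℕ) : ℝ :=
  6 * (n + 1) * (3 * n + 2) * (3 * n + 4) * (logTwoCertificatePoly n k /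
    ((3 * n + 2 * k + 3) * (3 * n + 2 * k + 4) * (3 * n + 2 * k + 5) * (3 * n + 2 * k + 6))) *
    (k * logTwoTerm n k)

lemma logTwoCertificate_succ_sub (n k : ℕ) :
    logTwoCertificate n (k + 1) - logTwoCertificate n k = logTwoTerm (n + 2) k
      - (29 * (n + 2) ^ 2 - 29 * (n + 2) + 8) * logTwoTerm (n + 1) k
      + 6 * (n + 1) ^ 2 * (9 * (n + 1) ^ 2 - 1) * logTwoTerm n k := by
  simp only [logTwoCertificate, logTwoCertificatePoly, logTwoTerm_succ_left, logTwoTerm_succ_right]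
  push_cast
  field_simp
  ring

lemma abs_logTwoCertificatePoly_le {n k : ℝ} (hn : 0 ≤ n) (hk : 0 ≤ k) :
    |logTwoCertificatePoly n k| ≤
      (3 * n + 2 * k + 3) * (3 * n + 2 * k + 4) * (3 * n + 2 * k + 5) * (3 * n + 2 * k + 6) := by
  rw [abs_le, logTwoCertificatePoly, ← sub_nonneg, ← sub_nonneg (b := _ - _)]
  constructor <;> ring_nf <;> positivity

lemma abs_logTwoCertificate_le (n k : ℕ) : |logTwoCertificate n k| ≤
    6 * (n + 1) * (3 * n + 2) * (3 * n + 4) * (k * logTwoTerm n k) := by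
  have hterm : 0 ≤ k * logTwoTerm n k := mul_nonneg k.cast_nonneg (logTwoTerm_nonneg n k)
  have hratio : |logTwoCertificatePoly n k / ((3 * n + 2 * k + 3) * (3 * n + 2 * k + 4) *
      (3 * n + 2 * k + 5) * (3 * n + 2 * k + 6))| ≤ 1 := by
    rw [abs_div, abs_of_pos (a := _ * _) (by positivity)]
    exact div_le_one_of_le₀ (abs_logTwoCertificatePoly_le n.cast_nonneg k.cast_nonneg)
      (by positivity)
  rw [logTwoCertificate, abs_mul, abs_mul, abs_of_nonneg hterm, abs_of_nonneg (by positivity)]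
  exact mul_le_mul_of_nonneg_right (mul_le_of_le_one_right (by positivity) hratio) hterm

lemma tendsto_logTwoCertificate (n : ℕ) : Tendsto (logTwoCertificate n) atTop (𝓝 0) := by
  refine squeeze_zero_norm (abs_logTwoCertificate_le n) ?_
  simpa only [mul_zero] using (tendsto_natCast_mul_logTwoTerm n).const_mul
    (6 * ((n : ℝ) + 1) * (3 * n + 2) * (3 * n + 4))

lemma logTwoRemainder_add_two (n : ℕ) :
    logTwoRemainder (n + 2) = (29 * (n + 2) ^ 2 - 29 * (n + 2) + 8) * logTwoRemainder (n + 1)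
      + -(6 * (n + 1) ^ 2 * (9 * (n + 1) ^ 2 - 1)) * logTwoRemainder n := by
  have hsum := ((summable_logTwoTerm (n + 2)).hasSum.sub
    ((summable_logTwoTerm (n + 1)).hasSum.mul_left
      (29 * ((n : ℝ) + 2) ^ 2 - 29 * (n + 2) + 8))).add
    ((summable_logTwoTerm n).hasSum.mul_left (6 * ((n : ℝ) + 1) ^ 2 * (9 * (n + 1) ^ 2 - 1)))
  simp only [← logTwoCertificate_succ_sub] at hsum
  have hvalue := eq_sub_of_hasSum_sub_of_tendsto hsum (tendsto_logTwoCertificate n)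
  have hzero : logTwoCertificate n 0 = 0 := by simp [logTwoCertificate]
  rw [hzero] at hvalue
  simp only [logTwoRemainder]
  linear_combination hvalue

end Remainder

lemma denominator_pos_and_growth {q : ℕ → ℝ}
    (hq : ∀ n : ℕ, q (n + 2) = (29 * ((n : ℝ) + 2) ^ 2 - 29 * (n + 2) + 8) * q (n + 1)
      + -(6 * ((n : ℝ) + 1) ^ 2 * (9 * (n + 1) ^ 2 - 1)) * q n)
    (h₀ : 0 < q 0) (h₁ : 8 * q 0 ≤ q 1) (n : ℕ) :
    0 < q n ∧ 8 * ((n : ℝ) + 1) ^ 2 * q n ≤ q (n + 1) := by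
  refine pos_and_mul_le_succ_of_three_term_recurrence (c := fun n => 8 * ((n : ℝ) + 1) ^ 2) hq
    (fun n => by positivity) (fun n => ?_) (fun n => ?_) h₀ (by simpa using h₁) n
  · rw [neg_nonpos]
    ring_nf
    positivity
  · rw [← sub_nonneg]
    push_cast
    ring_nf
    positivity

theorem stmt_19 
    (a b p q : ℕ → ℝ)
    (ha0 : a 0 = 0)
    (ha : ∀ n : ℕ, 1 ≤ n → a n = 29 * (n : ℝ) ^ 2 - 29 * (n : ℝ) + 8)
    (hb0 : b 0 = 5)
    (hb : ∀ n : ℕ, 1 ≤ n → b n = -(6 * (n : ℝ) ^ 2 * (9 * (n : ℝ) ^ 2 - 1)))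
    (hp0 : p 0 = a 0) (hq0 : q 0 = 1)
    (hp1 : p 1 = a 0 * a 1 + b 0) (hq1 : q 1 = a 1)
    (hp : ∀ n : ℕ, p (n + 2) = a (n + 2) * p (n + 1) + b (n + 1) * p n)
    (hq : ∀ n : ℕ, q (n + 2) = a (n + 2) * q (n + 1) + b (n + 1) * q n) :
    Tendsto (fun n => p n / q n) atTop (𝓝 (Real.log 2)) := by
  have ha1 : a 1 = 8 := by rw [ha 1 le_rfl]; norm_num
  have ha_add_two (n : ℕ) : a (n + 2) = 29 * ((n : ℝ) + 2) ^ 2 - 29 * (n + 2) + 8 := by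
    simpa using ha (n + 2) (by omega)
  have hb_succ (n : ℕ) : b (n + 1) = -(6 * ((n : ℝ) + 1) ^ 2 * (9 * (n + 1) ^ 2 - 1)) := by
    simpa using hb (n + 1) (by omega)
  have hremainder : ∀ n, q n * Real.log 2 - p n = logTwoRemainder n :=
    eq_of_three_term_recurrence (a := fun n => a (n + 2)) (b := fun n => b (n + 1))
      (fun n => by rw [hp, hq]; ring)
      (fun n => by rw [ha_add_two, hb_succ, logTwoRemainder_add_two])
      (by rw [hq0, hp0, ha0, logTwoRemainder_zero]; ring)
      (by rw [hq1, hp1, ha0, ha1, hb0, logTwoRemainder_one]; ring)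
  have hgrowth : ∀ n, 0 < q n ∧ 8 * ((n : ℝ) + 1) ^ 2 * q n ≤ q (n + 1) :=
    denominator_pos_and_growth (fun n => by rw [hq, ha_add_two, hb_succ]) (by norm_num [hq0])
      (by norm_num [hq0, hq1, ha1])
  refine tendsto_div_of_tendsto_remainder_div (fun n => (hgrowth n).1.ne') ?_
  simp only [hremainder]
  exact tendsto_div_zero_of_growth zero_le_two (by norm_num) (fun n => by positivity)
    logTwoRemainder_nonneg (fun n => (hgrowth n).1) logTwoRemainder_succ_le
    (fun n => (hgrowth n).2)
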